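/- There is no separable complex Banach algebra B such that every separable complex Banach algebra A admits a contractive homomorphic embedding into B; that is, for every separable Banach algebra B there exists a separable Banach algebra A such that no injective algebra homomorphism φ : A → B satisfies both ‖φ(a)‖ ≤ ‖a‖ for all a and the existence of c > 0 with c‖a‖ ≤ ‖φ(a)‖ for all a. -/

import Mathlib

/-- A bundled separable complex Banach algebra: a complete normed (not
necessarily unital, not necessarily commutative) ring which is a normed space
over `ℂ` whose multiplication is `ℂ`-bilinear, and whose underlying metric
space is separable. -/
structure SepBanachAlgebra : Type 1 where
  carrier : Type
  [ring : NonUnitalNormedRing carrier]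
  [normedSpace : NormedSpace ℂ carrier]
  [tower : IsScalarTower ℂ carrier carrier]
  [smulComm : SMulCommClass ℂ carrier carrier]
  [complete : CompleteSpace carrier]
  [separable : TopologicalSpace.SeparableSpace carrier]

attribute [instance] SepBanachAlgebra.ring SepBanachAlgebra.normedSpace
  SepBanachAlgebra.tower SepBanachAlgebra.smulComm
  SepBanachAlgebra.complete SepBanachAlgebra.separable

open Finset

lemma pp_shift {G : Type*} [Fintype G] [DecidableEq G] (a : G → ℝ) (α : G → G) (hα : Function.Injective α) (D : ℝ)
    (hD : ∑ z, (a z - a (α z)) ^ 2 ≤ D) (s : Finset G) :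
    ∑ z ∈ s, a z ^ 2 ≤ ∑ z ∈ s.image α, a z ^ 2 + (20 * D + (∑ z, a z ^ 2) / 20) := by
  rw [Finset.sum_image (fun x _ y _ h => hα h)]
  have h1 : ∀ z, a z ^ 2 - a (α z) ^ 2 ≤ 20 * (a z - a (α z)) ^ 2 + (a z ^ 2 + a (α z) ^ 2) / 40 := by
    intro z
    nlinarith [sq_nonneg (40 * (a z - a (α z)) - (a z + a (α z))), sq_nonneg (a z - a (α z))]
  have h2 : ∑ z ∈ s, (a z ^ 2 - a (α z) ^ 2) ≤
      ∑ z ∈ s, (20 * (a z - a (α z)) ^ 2 + (a z ^ 2 + a (α z) ^ 2) / 40) :=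
    Finset.sum_le_sum fun z _ => h1 z
  have h3 : ∑ z ∈ s, (20 * (a z - a (α z)) ^ 2 + (a z ^ 2 + a (α z) ^ 2) / 40) ≤
      ∑ z, (20 * (a z - a (α z)) ^ 2 + (a z ^ 2 + a (α z) ^ 2) / 40) :=
    Finset.sum_le_univ_sum_of_nonneg fun z => by positivity
  have h4 : ∑ z, a (α z) ^ 2 = ∑ z, a z ^ 2 :=
    (Function.Injective.bijective_of_finite hα).sum_comp (fun z => a z ^ 2)
  replace h3 := h2.trans h3
  rw [Finset.sum_sub_distrib, Finset.sum_add_distrib, ← Finset.mul_sum, ← Finset.sum_div,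
    Finset.sum_add_distrib (f := fun z => a z ^ 2), h4] at h3
  linarith

lemma vma_add {N : ℕ} [NeZero N] (x y : ZMod N) (hx : 4 * |x.valMinAbs| < N) (hy : 4 * |y.valMinAbs| < N) :
    (x + y).valMinAbs = x.valMinAbs + y.valMinAbs := by
  rw [ZMod.valMinAbs_spec]
  refine ⟨by push_cast; simp, ?_⟩
  rw [Set.mem_Ioc]
  have := abs_lt.1 (show |x.valMinAbs| < (N+3)/4 by omega)
  constructor
  · have := neg_abs_le x.valMinAbs
    have := neg_abs_le y.valMinAbs
    omega
  · have := le_abs_self x.valMinAbs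
    have := le_abs_self y.valMinAbs
    omega

lemma vma_sub {N : ℕ} [NeZero N] (x y : ZMod N) (hx : 4 * |x.valMinAbs| < N) (hy : 4 * |y.valMinAbs| < N) :
    (x - y).valMinAbs = x.valMinAbs - y.valMinAbs := by
  rw [ZMod.valMinAbs_spec]
  refine ⟨by push_cast; simp, ?_⟩
  rw [Set.mem_Ioc]
  constructor
  · have := neg_abs_le x.valMinAbs
    have := le_abs_self y.valMinAbs
    omega
  · have := le_abs_self x.valMinAbs
    have := neg_abs_le y.valMinAbs
    omega

/-- ping-pong estimate on the dual of `(ℤ/N)²`. -/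
lemma pingpong (N : ℕ) [NeZero N] (a : ZMod N × ZMod N → ℝ) (ha0 : a 0 = 0) (D : ℝ)
    (hA : ∑ z, (a z - a (z.1, z.2 - z.1)) ^ 2 ≤ D)
    (hB : ∑ z, (a z - a (z.1 - z.2, z.2)) ^ 2 ≤ D)
    (h1 : ∑ z ∈ univ.filter (fun z : ZMod N × ZMod N => (N : ℤ) ≤ 4 * |z.1.valMinAbs|), a z ^ 2 ≤ D)
    (h2 : ∑ z ∈ univ.filter (fun z : ZMod N × ZMod N => (N : ℤ) ≤ 4 * |z.2.valMinAbs|), a z ^ 2 ≤ D) :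
    ∑ z, a z ^ 2 ≤ 440 * D := by
  classical
  set M := ∑ z, a z ^ 2 with hM
  let μ : Finset (ZMod N × ZMod N) → ℝ := fun s => ∑ z ∈ s, a z ^ 2
  have μmono : ∀ s t, s ⊆ t → μ s ≤ μ t := fun s t h =>
    Finset.sum_le_sum_of_subset_of_nonneg h fun z _ _ => sq_nonneg _
  have μunion : ∀ s t, μ (s ∪ t) ≤ μ s + μ t := fun s t => by
    have := Finset.sum_union_inter (s₁ := s) (s₂ := t) (f := fun z => a z ^ 2)
    have h : 0 ≤ μ (s ∩ t) := Finset.sum_nonneg fun z _ => sq_nonneg _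
    simp only [μ] at *
    linarith
  have μdisj : ∀ s t, Disjoint s t → μ (s ∪ t) = μ s + μ t := fun s t h => Finset.sum_union h
  let α : ZMod N × ZMod N → ZMod N × ZMod N := fun z => (z.1, z.2 - z.1)
  let α' : ZMod N × ZMod N → ZMod N × ZMod N := fun z => (z.1, z.2 + z.1)
  let β : ZMod N × ZMod N → ZMod N × ZMod N := fun z => (z.1 - z.2, z.2)
  let β' : ZMod N × ZMod N → ZMod N × ZMod N := fun z => (z.1 + z.2, z.2)
  have iα : Function.Injective α := fun x y h => by
    simp only [α, Prod.mk.injEq] at h; ext1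
    · exact h.1
    · have := h.2; rw [h.1] at this; exact sub_left_injective this
  have iα' : Function.Injective α' := fun x y h => by
    simp only [α', Prod.mk.injEq] at h; ext1
    · exact h.1
    · have := h.2; rw [h.1] at this; exact add_left_injective _ this
  have iβ : Function.Injective β := fun x y h => by
    simp only [β, Prod.mk.injEq] at h; ext1
    · have := h.1; rw [h.2] at this; exact sub_left_injective this
    · exact h.2
  have iβ' : Function.Injective β' := fun x y h => by
    simp only [β', Prod.mk.injEq] at h; ext1
    · have := h.1; rw [h.2] at this; exact add_left_injective _ this
    · exact h.2
  have hA' : ∑ z, (a z - a (α' z)) ^ 2 ≤ D := by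
    refine le_trans (le_of_eq ?_) hA
    rw [← (Function.Injective.bijective_of_finite iα').sum_comp (fun z => (a z - a (z.1, z.2 - z.1)) ^ 2)]
    refine Finset.sum_congr rfl fun z _ => ?_
    simp [α']; ring
  have hB' : ∑ z, (a z - a (β' z)) ^ 2 ≤ D := by
    refine le_trans (le_of_eq ?_) hB
    rw [← (Function.Injective.bijective_of_finite iβ').sum_comp (fun z => (a z - a (z.1 - z.2, z.2)) ^ 2)]
    refine Finset.sum_congr rfl fun z _ => ?_
    simp [β']; ring
  let X : ZMod N × ZMod N → ℤ := fun z => z.1.valMinAbs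
  let Y : ZMod N × ZMod N → ℤ := fun z => z.2.valMinAbs
  let W := univ.filter (fun z : ZMod N × ZMod N => 4 * |X z| < N ∧ 4 * |Y z| < N)
  have eX : ∀ z ∈ W, X (β' z) = X z + Y z ∧ Y (β' z) = Y z ∧ X (α' z) = X z ∧ Y (α' z) = Y z + X z
      ∧ X (β z) = X z - Y z ∧ Y (β z) = Y z ∧ X (α z) = X z ∧ Y (α z) = Y z - X z := by
    intro z hz
    simp only [W, mem_filter, mem_univ, true_and] at hz
    exact ⟨vma_add _ _ hz.1 hz.2, rfl, rfl, vma_add _ _ hz.2 hz.1, vma_sub _ _ hz.1 hz.2, rfl, rfl,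
      vma_sub _ _ hz.2 hz.1⟩
  have hw : μ (univ \ W) ≤ 2 * D := by
    have : univ \ W ⊆ univ.filter (fun z : ZMod N × ZMod N => (N : ℤ) ≤ 4 * |z.1.valMinAbs|) ∪
      univ.filter (fun z : ZMod N × ZMod N => (N : ℤ) ≤ 4 * |z.2.valMinAbs|) := by
      intro z hz
      simp only [W, X, Y, mem_sdiff, mem_filter, mem_univ, true_and, mem_union, not_and_or, not_lt] at hz ⊢
      exact hz
    have h3 := μmono _ _ this
    have h4 := μunion (univ.filter (fun z : ZMod N × ZMod N => (N : ℤ) ≤ 4 * |z.1.valMinAbs|))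
      (univ.filter (fun z : ZMod N × ZMod N => (N : ℤ) ≤ 4 * |z.2.valMinAbs|))
    simp only [μ] at *
    linarith
  have split : ∀ s, μ s ≤ μ (s ∩ W) + 2 * D := by
    intro s
    have h3 : s ⊆ (s ∩ W) ∪ (univ \ W) := by
      intro z hz
      by_cases h : z ∈ W <;> simp [h, hz]
    have := μmono _ _ h3
    have := μunion (s ∩ W) (univ \ W)
    linarith
  set e := 20 * D + M / 20 with he
  have sα : ∀ s, μ s ≤ μ (s.image α) + e := pp_shift a α iα D hA
  have sβ : ∀ s, μ s ≤ μ (s.image β) + e := pp_shift a β iβ D hB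
  have sα' : ∀ s, μ s ≤ μ (s.image α') + e := pp_shift a α' iα' D hA'
  have sβ' : ∀ s, μ s ≤ μ (s.image β') + e := pp_shift a β' iβ' D hB'
  let P := univ.filter (fun z : ZMod N × ZMod N => (0 < X z ∧ 0 < Y z) ∨ (X z < 0 ∧ Y z < 0))
  let Q := univ.filter (fun z : ZMod N × ZMod N => (0 < X z ∧ Y z < 0) ∨ (X z < 0 ∧ 0 < Y z))
  let E₁ := univ.filter (fun z : ZMod N × ZMod N => X z = 0 ∧ Y z ≠ 0)
  let E₂ := univ.filter (fun z : ZMod N × ZMod N => X z ≠ 0 ∧ Y z = 0)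
  have hP : μ P ≤ 2 * e + 4 * D := by
    have hd : Disjoint ((P ∩ W).image α') ((P ∩ W).image β') := by
      rw [Finset.disjoint_left]
      intro z h h'
      rw [mem_image] at h h'
      obtain ⟨u, hu, rfl⟩ := h
      obtain ⟨v, hv, hv'⟩ := h'
      rw [mem_inter] at hu hv
      obtain ⟨a1, a2, a3, a4, _⟩ := eX u hu.2
      obtain ⟨b1, b2, b3, b4, _⟩ := eX v hv.2
      rw [hv'] at b1 b2
      have hu1 := hu.1
      have hv1 := hv.1
      simp only [P, mem_filter, mem_univ, true_and] at hu1 hv1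
      omega
    have hs : (P ∩ W).image α' ∪ (P ∩ W).image β' ⊆ P := by
      intro z h
      rw [mem_union, mem_image, mem_image] at h
      obtain ⟨u, hu, rfl⟩ | ⟨u, hu, rfl⟩ := h <;>
      · rw [mem_inter] at hu
        obtain ⟨a1, a2, a3, a4, _⟩ := eX u hu.2
        have hu1 := hu.1
        simp only [P, mem_filter, mem_univ, true_and] at hu1 ⊢
        omega
    have := μmono _ _ hs
    rw [μdisj _ _ hd] at this
    linarith [sα' (P ∩ W), sβ' (P ∩ W), split P]
  have hQ : μ Q ≤ 2 * e + 4 * D := by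
    have hd : Disjoint ((Q ∩ W).image α) ((Q ∩ W).image β) := by
      rw [Finset.disjoint_left]
      intro z h h'
      rw [mem_image] at h h'
      obtain ⟨u, hu, rfl⟩ := h
      obtain ⟨v, hv, hv'⟩ := h'
      rw [mem_inter] at hu hv
      obtain ⟨_, _, _, _, a1, a2, a3, a4⟩ := eX u hu.2
      obtain ⟨_, _, _, _, b1, b2, b3, b4⟩ := eX v hv.2
      rw [hv'] at b1 b2
      have hu1 := hu.1
      have hv1 := hv.1
      simp only [Q, mem_filter, mem_univ, true_and] at hu1 hv1
      omega
    have hs : (Q ∩ W).image α ∪ (Q ∩ W).image β ⊆ Q := by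
      intro z h
      rw [mem_union, mem_image, mem_image] at h
      obtain ⟨u, hu, rfl⟩ | ⟨u, hu, rfl⟩ := h <;>
      · rw [mem_inter] at hu
        obtain ⟨_, _, _, _, a1, a2, a3, a4⟩ := eX u hu.2
        have hu1 := hu.1
        simp only [Q, mem_filter, mem_univ, true_and] at hu1 ⊢
        omega
    have := μmono _ _ hs
    rw [μdisj _ _ hd] at this
    linarith [sα (Q ∩ W), sβ (Q ∩ W), split Q]
  have hE1 : μ E₁ ≤ μ P + e + 2 * D := by
    have hs : (E₁ ∩ W).image β' ⊆ P := by
      intro z h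
      rw [mem_image] at h
      obtain ⟨u, hu, rfl⟩ := h
      rw [mem_inter] at hu
      obtain ⟨a1, a2, a3, a4, _⟩ := eX u hu.2
      have hu1 := hu.1
      simp only [E₁, P, mem_filter, mem_univ, true_and] at hu1 ⊢
      omega
    linarith [μmono _ _ hs, sβ' (E₁ ∩ W), split E₁]
  have hE2 : μ E₂ ≤ μ P + e + 2 * D := by
    have hs : (E₂ ∩ W).image α' ⊆ P := by
      intro z h
      rw [mem_image] at h
      obtain ⟨u, hu, rfl⟩ := h
      rw [mem_inter] at hu
      obtain ⟨a1, a2, a3, a4, _⟩ := eX u hu.2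
      have hu1 := hu.1
      simp only [E₂, P, mem_filter, mem_univ, true_and] at hu1 ⊢
      omega
    linarith [μmono _ _ hs, sα' (E₂ ∩ W), split E₂]
  have htot : M ≤ μ (P ∪ Q ∪ (E₁ ∪ E₂)) := by
    rw [hM]
    refine le_of_eq (Eq.symm ?_)
    refine Finset.sum_subset (Finset.subset_univ _) fun z _ hz => ?_
    have : z = 0 := by
      by_contra hne
      apply hz
      have : ¬ (X z = 0 ∧ Y z = 0) := by
        rintro ⟨h, h'⟩
        apply hne
        ext1
        · exact (ZMod.valMinAbs_eq_zero _).1 h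
        · exact (ZMod.valMinAbs_eq_zero _).1 h'
      simp only [P, Q, E₁, E₂, mem_union, mem_filter, mem_univ, true_and]
      omega
    rw [this, ha0]; simp
  have := μunion (P ∪ Q) (E₁ ∪ E₂)
  have := μunion P Q
  have := μunion E₁ E₂
  linarith

/-- the five moves: identity, two translations, two shears. -/
def mv (R : Type) [CommRing R] : Fin 5 → Equiv.Perm (R × R) :=
  ![1, Equiv.addRight (1, 0), Equiv.addRight (0, 1),
    ⟨fun x => (x.1 + x.2, x.2), fun x => (x.1 - x.2, x.2), fun x => by simp, fun x => by simp⟩,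
    ⟨fun x => (x.1, x.2 + x.1), fun x => (x.1, x.2 - x.1), fun x => by simp, fun x => by simp⟩]

section
variable {N : ℕ} [NeZero N]

/-- unnormalised Fourier transform on `(ℤ/N)²`. -/
noncomputable def hat (f : ZMod N × ZMod N → ℂ) (z : ZMod N × ZMod N) : ℂ :=
  ∑ x : ZMod N × ZMod N, f x * ZMod.stdAddChar (z.1 * x.1 + z.2 * x.2)

lemma conj_std (t : ZMod N) : (starRingEnd ℂ) (ZMod.stdAddChar t) = ZMod.stdAddChar (-t) :=
  (AddChar.map_neg_eq_conj _ _).symm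

lemma orth (w : ZMod N × ZMod N) :
    ∑ z : ZMod N × ZMod N, (ZMod.stdAddChar (z.1 * w.1 + z.2 * w.2) : ℂ) = if w = 0 then (N : ℂ) ^ 2 else 0 := by
  rw [Fintype.sum_prod_type]
  simp only [AddChar.map_add_eq_mul]
  simp only [← Finset.mul_sum, ← Finset.sum_mul]
  rw [AddChar.sum_mulShift _ (ZMod.isPrimitive_stdAddChar N), AddChar.sum_mulShift _ (ZMod.isPrimitive_stdAddChar N)]
  rcases w with ⟨w1, w2⟩
  by_cases h1 : w1 = 0 <;> by_cases h2 : w2 = 0 <;> simp [h1, h2, Prod.ext_iff, ZMod.card, sq]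

lemma parseval (f : ZMod N × ZMod N → ℂ) :
    ∑ z, ‖hat f z‖ ^ 2 = (N : ℝ) ^ 2 * ∑ x, ‖f x‖ ^ 2 := by
  have key : ∑ z, hat f z * (starRingEnd ℂ) (hat f z) = (N : ℂ) ^ 2 * ∑ x, f x * (starRingEnd ℂ) (f x) := by
    have h1 : ∀ z, hat f z * (starRingEnd ℂ) (hat f z) =
        ∑ x : ZMod N × ZMod N, ∑ y : ZMod N × ZMod N, f x * (starRingEnd ℂ) (f y) *
          ZMod.stdAddChar (z.1 * (x - y).1 + z.2 * (x - y).2) := by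
      intro z
      simp only [hat, map_sum, map_mul, conj_std]
      rw [Finset.sum_mul_sum]
      refine Finset.sum_congr rfl fun x _ => Finset.sum_congr rfl fun y _ => ?_
      have : z.1 * (x - y).1 + z.2 * (x - y).2 = (z.1 * x.1 + z.2 * x.2) + (-(z.1 * y.1 + z.2 * y.2)) := by
        simp only [Prod.fst_sub, Prod.snd_sub]; ring
      rw [this, AddChar.map_add_eq_mul _ (z.1 * x.1 + z.2 * x.2) (-(z.1 * y.1 + z.2 * y.2))]
      ring
    simp only [h1]
    rw [Finset.sum_comm, Finset.mul_sum]
    refine Finset.sum_congr rfl fun x _ => ?_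
    rw [Finset.sum_comm]
    simp only [← Finset.mul_sum, orth, sub_eq_zero]
    simp
    ring
  simp only [Complex.mul_conj'] at key
  exact_mod_cast key

lemma hat_sub (f g : ZMod N × ZMod N → ℂ) (z) : hat (fun x => f x - g x) z = hat f z - hat g z := by
  simp only [hat, sub_mul, Finset.sum_sub_distrib]

lemma hat1 (f : ZMod N × ZMod N → ℂ) (z) :
    hat (fun x => f (mv _ 1 x)) z = ZMod.stdAddChar (-z.1) * hat f z := by
  simp only [hat]
  rw [← Equiv.sum_comp (mv (ZMod N) 1) (fun x => f x * ZMod.stdAddChar (z.1 * x.1 + z.2 * x.2)), Finset.mul_sum]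
  refine Finset.sum_congr rfl fun x _ => ?_
  rw [mul_left_comm, ← AddChar.map_add_eq_mul]
  congr 2
  simp [mv]; ring

lemma hat2 (f : ZMod N × ZMod N → ℂ) (z) :
    hat (fun x => f (mv _ 2 x)) z = ZMod.stdAddChar (-z.2) * hat f z := by
  simp only [hat]
  rw [← Equiv.sum_comp (mv (ZMod N) 2) (fun x => f x * ZMod.stdAddChar (z.1 * x.1 + z.2 * x.2)), Finset.mul_sum]
  refine Finset.sum_congr rfl fun x _ => ?_
  rw [mul_left_comm, ← AddChar.map_add_eq_mul]
  congr 2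
  simp [mv]; ring

lemma hat3 (f : ZMod N × ZMod N → ℂ) (z) :
    hat (fun x => f (mv _ 3 x)) z = hat f (z.1, z.2 - z.1) := by
  simp only [hat]
  rw [← Equiv.sum_comp (mv (ZMod N) 3) (fun x => f x * ZMod.stdAddChar (z.1 * x.1 + (z.2 - z.1) * x.2))]
  refine Finset.sum_congr rfl fun x _ => ?_
  congr 2
  simp [mv]; ring

lemma hat4 (f : ZMod N × ZMod N → ℂ) (z) :
    hat (fun x => f (mv _ 4 x)) z = hat f (z.1 - z.2, z.2) := by
  simp only [hat]
  rw [← Equiv.sum_comp (mv (ZMod N) 4) (fun x => f x * ZMod.stdAddChar ((z.1 - z.2) * x.1 + z.2 * x.2))]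
  refine Finset.sum_congr rfl fun x _ => ?_
  congr 2
  simp [mv]; ring

lemma far (t : ZMod N) (h : (N : ℤ) ≤ 4 * |t.valMinAbs|) :
    1 ≤ ‖1 - (ZMod.stdAddChar (-t) : ℂ)‖ := by
  have hN : (0 : ℝ) < N := Nat.cast_pos.2 (NeZero.pos N)
  rw [← conj_std]
  have h0 : (ZMod.stdAddChar t : ℂ).re ≤ 0 := by
    conv_lhs => rw [← ZMod.coe_valMinAbs t]
    rw [ZMod.stdAddChar_coe]
    have e1 : (2 * Real.pi * Complex.I * (t.valMinAbs : ℂ) / N : ℂ) =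
        ((2 * Real.pi * t.valMinAbs / N : ℝ) : ℂ) * Complex.I := by
      push_cast; ring
    rw [e1, Complex.exp_ofReal_mul_I_re, ← Real.cos_abs]
    have e2 : |2 * Real.pi * t.valMinAbs / N| = 2 * Real.pi * |(t.valMinAbs : ℝ)| / N := by
      rw [abs_div, abs_mul, abs_of_pos Real.two_pi_pos, abs_of_pos hN]
    have h1 := (ZMod.valMinAbs_mem_Ioc t)
    have h2 : 2 * |t.valMinAbs| ≤ N := by
      rw [Set.mem_Ioc] at h1
      rcases abs_cases t.valMinAbs with h | h <;> omega
    have h3 : 2 * |(t.valMinAbs : ℝ)| ≤ N := by exact_mod_cast h2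
    have h4 : (N : ℝ) ≤ 4 * |(t.valMinAbs : ℝ)| := by exact_mod_cast h
    rw [e2]
    apply Real.cos_nonpos_of_pi_div_two_le_of_le
    · rw [le_div_iff₀ hN]; nlinarith [Real.pi_pos]
    · have : 2 * Real.pi * |(t.valMinAbs : ℝ)| / N ≤ Real.pi := by
        rw [div_le_iff₀ hN]; nlinarith [Real.pi_pos]
      linarith [Real.pi_pos]
  calc (1 : ℝ) ≤ (1 - (starRingEnd ℂ) (ZMod.stdAddChar t : ℂ)).re := by simp [h0]
    _ ≤ _ := Complex.re_le_norm _

lemma poincare2 (f : ZMod N × ZMod N → ℝ) (hf : ∑ x, f x = 0) :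
    ∑ x, f x ^ 2 ≤ 440 * ∑ i : Fin 5, ∑ x, (f x - f (mv _ i x)) ^ 2 := by
  have hN : (0 : ℝ) < N := Nat.cast_pos.2 (NeZero.pos N)
  let F : ZMod N × ZMod N → ℂ := fun x => (f x : ℂ)
  let a : ZMod N × ZMod N → ℝ := fun z => ‖hat F z‖
  let D : Fin 5 → ℝ := fun i => ∑ x, (f x - f (mv _ i x)) ^ 2
  have hDi : ∀ i, ∑ z, ‖hat F z - hat (fun x => F (mv _ i x)) z‖ ^ 2 = (N : ℝ) ^ 2 * D i := by
    intro i
    simp only [← hat_sub]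
    rw [parseval]
    congr 1
    refine Finset.sum_congr rfl fun x _ => ?_
    simp only [F, ← Complex.ofReal_sub, Complex.norm_real, Real.norm_eq_abs, sq_abs]
  have hD0 : ∀ i, 0 ≤ D i := fun i => Finset.sum_nonneg fun x _ => sq_nonneg _
  have hDs : ∀ i, (N : ℝ) ^ 2 * D i ≤ (N : ℝ) ^ 2 * ∑ i, D i := fun i =>
    mul_le_mul_of_nonneg_left (Finset.single_le_sum (fun i _ => hD0 i) (Finset.mem_univ i)) (by positivity)
  have hsq : ∀ u v : ℂ, (‖u‖ - ‖v‖) ^ 2 ≤ ‖u - v‖ ^ 2 := fun u v => by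
    rw [← sq_abs]
    exact pow_le_pow_left₀ (abs_nonneg _) (abs_norm_sub_norm_le u v) 2
  have hm : ∀ (w : ℂ) (u : ℂ), 1 ≤ ‖1 - w‖ → ‖u‖ ^ 2 ≤ ‖u - w * u‖ ^ 2 := by
    intro w u h
    have : u - w * u = (1 - w) * u := by ring
    rw [this, norm_mul]
    exact pow_le_pow_left₀ (norm_nonneg _) (le_mul_of_one_le_left (norm_nonneg _) h) 2
  have main := pingpong N a (by
      simp only [a, hat, F, norm_eq_zero]
      simp only [Prod.fst_zero, Prod.snd_zero, zero_mul, add_zero, AddChar.map_zero_eq_one, mul_one]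
      exact_mod_cast hf) ((N : ℝ) ^ 2 * ∑ i, D i) ?_ ?_ ?_ ?_
  · have hp := parseval F
    have : ∑ x, ‖F x‖ ^ 2 = ∑ x, f x ^ 2 := by
      refine Finset.sum_congr rfl fun x _ => ?_
      simp [F]
    rw [this] at hp
    simp only [a] at main
    rw [hp] at main
    have hN2 : (0 : ℝ) < (N : ℝ) ^ 2 := by positivity
    refine le_of_mul_le_mul_left ?_ hN2
    linarith
  · refine le_trans ?_ (hDs 3)
    rw [← hDi 3]
    refine Finset.sum_le_sum fun z _ => ?_
    rw [hat3]; exact hsq _ _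
  · refine le_trans ?_ (hDs 4)
    rw [← hDi 4]
    refine Finset.sum_le_sum fun z _ => ?_
    rw [hat4]; exact hsq _ _
  · refine le_trans ?_ (hDs 1)
    rw [← hDi 1]
    refine le_trans (Finset.sum_le_sum (g := fun z => ‖hat F z - hat (fun x => F (mv _ 1 x)) z‖ ^ 2) fun z hz => ?_)
      (Finset.sum_le_univ_sum_of_nonneg fun z => by positivity)
    rw [hat1]
    exact hm _ _ (far _ (Finset.mem_filter.1 hz).2)
  · refine le_trans ?_ (hDs 2)
    rw [← hDi 2]
    refine le_trans (Finset.sum_le_sum (g := fun z => ‖hat F z - hat (fun x => F (mv _ 2 x)) z‖ ^ 2) fun z hz => ?_)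
      (Finset.sum_le_univ_sum_of_nonneg fun z => by positivity)
    rw [hat2]
    exact hm _ _ (far _ (Finset.mem_filter.1 hz).2)

/-- signed square root. -/
noncomputable def ssq (t : ℝ) : ℝ := SignType.sign t * √|t|

lemma ssq_sq (t : ℝ) : ssq t ^ 2 = |t| := by
  rcases lt_trichotomy t 0 with h | h | h <;> simp [ssq, h, mul_pow]

lemma ssq_eq (t : ℝ) : ssq t = √t - √(-t) := by
  rcases lt_trichotomy t 0 with h | h | h
  · simp [ssq, h, abs_of_neg h, Real.sqrt_eq_zero_of_nonpos h.le]
  · simp [ssq, h]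
  · simp [ssq, h, abs_of_pos h, Real.sqrt_eq_zero_of_nonpos (neg_nonpos.2 h.le)]

lemma ssq_sub (s t : ℝ) : (ssq s - ssq t) ^ 2 ≤ 2 * |s - t| := by
  rw [ssq_eq, ssq_eq]
  rcases le_total 0 s with hs | hs <;> rcases le_total 0 t with ht | ht
  · rw [Real.sqrt_eq_zero_of_nonpos (neg_nonpos.2 hs), Real.sqrt_eq_zero_of_nonpos (neg_nonpos.2 ht)]
    have h1 := Real.sq_sqrt hs
    have h2 := Real.sq_sqrt ht
    have h3 := Real.sqrt_nonneg s
    have h4 := Real.sqrt_nonneg t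
    rcases le_total s t with h | h
    · rw [abs_of_nonpos (by linarith)]
      have := Real.sqrt_le_sqrt h
      nlinarith
    · rw [abs_of_nonneg (by linarith)]
      have := Real.sqrt_le_sqrt h
      nlinarith
  · rw [Real.sqrt_eq_zero_of_nonpos (neg_nonpos.2 hs), Real.sqrt_eq_zero_of_nonpos ht]
    have h1 := Real.sq_sqrt hs
    have h2 := Real.sq_sqrt (neg_nonneg.2 ht)
    rw [abs_of_nonneg (by linarith)]
    nlinarith [sq_nonneg (√s - √(-t))]
  · rw [Real.sqrt_eq_zero_of_nonpos (neg_nonpos.2 ht), Real.sqrt_eq_zero_of_nonpos hs]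
    have h1 := Real.sq_sqrt ht
    have h2 := Real.sq_sqrt (neg_nonneg.2 hs)
    rw [abs_of_nonpos (by linarith)]
    nlinarith [sq_nonneg (√t - √(-s))]
  · rw [Real.sqrt_eq_zero_of_nonpos hs, Real.sqrt_eq_zero_of_nonpos ht]
    have h1 := Real.sq_sqrt (neg_nonneg.2 hs)
    have h2 := Real.sq_sqrt (neg_nonneg.2 ht)
    have h3 := Real.sqrt_nonneg (-s)
    have h4 := Real.sqrt_nonneg (-t)
    rcases le_total s t with h | h
    · rw [abs_of_nonpos (by linarith)]
      have := Real.sqrt_le_sqrt (neg_le_neg h)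
      nlinarith
    · rw [abs_of_nonneg (by linarith)]
      have := Real.sqrt_le_sqrt (neg_le_neg h)
      nlinarith

lemma ssq_cont : Continuous ssq := by
  have : ssq = fun t => √t - √(-t) := funext ssq_eq
  rw [this]; fun_prop

lemma poincare1 (f : ZMod N × ZMod N → ℝ) :
    ∃ c : ℝ, ∑ x, |f x - c| ≤ 880 * ∑ i : Fin 5, ∑ x, |f x - f (mv _ i x)| := by
  have hc : ∃ c : ℝ, ∑ x, ssq (f x - c) = 0 := by
    let g : ℝ → ℝ := fun c => ∑ x, ssq (f x - c)
    have hg : Continuous g := by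
      refine continuous_finsetSum _ fun x _ => ?_
      exact ssq_cont.comp (by fun_prop)
    let M := ∑ x, |f x|
    have hM : ∀ x, |f x| ≤ M := fun x => Finset.single_le_sum (fun i _ => abs_nonneg (f i)) (Finset.mem_univ x)
    have hM0 : 0 ≤ M := Finset.sum_nonneg fun i _ => abs_nonneg _
    have h1 : g M ≤ 0 := by
      refine Finset.sum_nonpos fun x _ => ?_
      rw [ssq_eq, Real.sqrt_eq_zero_of_nonpos (by linarith [hM x, le_abs_self (f x)])]
      linarith [Real.sqrt_nonneg (-(f x - M))]
    have h2 : 0 ≤ g (-M) := by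
      refine Finset.sum_nonneg fun x _ => ?_
      rw [ssq_eq, Real.sqrt_eq_zero_of_nonpos (x := -(f x - -M)) (by linarith [hM x, neg_abs_le (f x)])]
      linarith [Real.sqrt_nonneg (f x - -M)]
    have := intermediate_value_Icc' (show -M ≤ M by linarith) hg.continuousOn
    obtain ⟨c, _, hc⟩ := this ⟨h1, h2⟩
    exact ⟨c, hc⟩
  obtain ⟨c, hc⟩ := hc
  refine ⟨c, ?_⟩
  have := poincare2 (fun x => ssq (f x - c)) hc
  simp only [ssq_sq] at this
  refine this.trans ?_
  rw [show (880 : ℝ) = 440 * 2 by norm_num, mul_assoc]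
  refine mul_le_mul_of_nonneg_left ?_ (by norm_num)
  rw [Finset.mul_sum]
  refine Finset.sum_le_sum fun i _ => ?_
  rw [Finset.mul_sum]
  refine Finset.sum_le_sum fun x _ => ?_
  refine (ssq_sub _ _).trans (le_of_eq ?_)
  congr 2; ring

/-- bounded functions of mean zero are sums of five coboundaries of bounded functions. -/
lemma cobound (F : ZMod N × ZMod N → ℝ) (hF : ∀ x, |F x| ≤ 1) (hF0 : ∑ x, F x = 0) :
    ∃ g : Fin 5 → ZMod N × ZMod N → ℝ, (∀ i x, |g i x| ≤ 880) ∧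
      ∀ x, F x = ∑ i, (g i ((mv _ i).symm x) - g i x) := by
  let T : (Fin 5 → ZMod N × ZMod N → ℝ) →ₗ[ℝ] (ZMod N × ZMod N → ℝ) :=
    { toFun := fun g x => ∑ i, (g i ((mv _ i).symm x) - g i x)
      map_add' := fun g h => by
        funext x; simp only [Pi.add_apply, ← Finset.sum_add_distrib]
        refine Finset.sum_congr rfl fun i _ => by ring
      map_smul' := fun c g => by
        funext x; simp only [Pi.smul_apply, smul_eq_mul, RingHom.id_apply, Finset.mul_sum]
        refine Finset.sum_congr rfl fun i _ => by ring }
  let C : Set (Fin 5 → ZMod N × ZMod N → ℝ) := Set.univ.pi fun _ => Set.univ.pi fun _ => Set.Icc (-880) 880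
  have hCc : IsCompact C := isCompact_univ_pi fun _ => isCompact_univ_pi fun _ => isCompact_Icc
  have hCv : Convex ℝ C := convex_pi fun _ _ => convex_pi fun _ _ => convex_Icc _ _
  by_cases hmem : F ∈ T '' C
  · obtain ⟨g, hg, rfl⟩ := hmem
    refine ⟨g, fun i x => ?_, fun x => rfl⟩
    have := hg i trivial x trivial
    exact abs_le.2 this
  exfalso
  obtain ⟨φ, u, h1, h2⟩ := geometric_hahn_banach_closed_point (hCv.linear_image T)
    (hCc.image T.continuous_of_finiteDimensional).isClosed hmem
  let p : ZMod N × ZMod N → ℝ := fun x => φ (Pi.single x 1)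
  have hφ : ∀ h : ZMod N × ZMod N → ℝ, φ h = ∑ x, h x * p x := by
    intro h
    conv_lhs => rw [pi_eq_sum_univ' h]
    rw [map_sum]
    refine Finset.sum_congr rfl fun x _ => ?_
    rw [map_smul, smul_eq_mul]
  let g : Fin 5 → ZMod N × ZMod N → ℝ := fun i x => 880 * (SignType.sign (p (mv _ i x) - p x) : ℝ)
  have hg : g ∈ C := by
    intro i _ x _
    simp only [g]
    rcases SignType.sign (p (mv _ i x) - p x) with _ | _ | _ <;> norm_num
  have h3 := h1 _ ⟨g, hg, rfl⟩
  have h4 : φ (T g) = 880 * ∑ i : Fin 5, ∑ x, |p x - p (mv _ i x)| := by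
    rw [hφ]
    simp only [T, LinearMap.coe_mk, AddHom.coe_mk, Finset.sum_mul]
    rw [Finset.sum_comm, Finset.mul_sum]
    refine Finset.sum_congr rfl fun i _ => ?_
    simp only [sub_mul]
    rw [Finset.sum_sub_distrib, ← Equiv.sum_comp (mv (ZMod N) i) (fun x => g i ((mv _ i).symm x) * p x),
      ← Finset.sum_sub_distrib, Finset.mul_sum]
    refine Finset.sum_congr rfl fun x _ => ?_
    rw [Equiv.symm_apply_apply, ← mul_sub]
    simp only [g]
    rw [mul_assoc, sign_mul_self, abs_sub_comm]
  obtain ⟨c, hc⟩ := poincare1 p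
  have h5 : φ F ≤ ∑ x, |p x - c| := by
    have : φ F = ∑ x, F x * (p x - c) := by
      rw [hφ]; simp only [mul_sub, Finset.sum_sub_distrib, ← Finset.sum_mul, hF0]; simp
    rw [this]
    refine Finset.sum_le_sum fun x _ => ?_
    refine (le_abs_self _).trans ?_
    rw [abs_mul]
    exact mul_le_of_le_one_left (abs_nonneg _) (hF x)
  linarith
end

lemma mv_zero_symm (R : Type) [CommRing R] (x : R × R) : (mv R 0).symm x = x := rfl

lemma mv_map {R S : Type} [CommRing R] [CommRing S] (f : R →+* S) (i : Fin 5) (x : R × R) :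
    ((f ((mv R i).symm x).1, f ((mv R i).symm x).2) : S × S) = (mv S i).symm (f x.1, f x.2) := by
  fin_cases i
  · rfl
  · simp [mv, Equiv.addRight, sub_eq_add_neg]
  · simp [mv, Equiv.addRight, sub_eq_add_neg]
  · simp [mv]
  · simp [mv]

lemma cobound2 {p q : ℕ} [NeZero p] [NeZero q] (hpq : p.Coprime q)
    (F : ZMod p × ZMod p → ZMod q × ZMod q → ℝ) (hF : ∀ x y, |F x y| ≤ 1)
    (hF0 : ∑ x, ∑ y, F x y = 0) :
    ∃ g : Fin 5 → ZMod p × ZMod p → ZMod q × ZMod q → ℝ, (∀ i x y, |g i x y| ≤ 880) ∧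
      ∀ x y, F x y = ∑ i, (g i ((mv _ i).symm x) ((mv _ i).symm y) - g i x y) := by
  have : NeZero (p * q) := ⟨mul_ne_zero (NeZero.ne p) (NeZero.ne q)⟩
  let c := ZMod.chineseRemainder hpq
  let c1 : ZMod (p * q) →+* ZMod p := (RingHom.fst _ _).comp c.toRingHom
  let c2 : ZMod (p * q) →+* ZMod q := (RingHom.snd _ _).comp c.toRingHom
  let e : ZMod (p * q) × ZMod (p * q) ≃ (ZMod p × ZMod p) × (ZMod q × ZMod q) :=
    (Equiv.prodCongr c.toEquiv c.toEquiv).trans (Equiv.prodProdProdComm _ _ _ _)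
  have he : ∀ x, e x = ((c1 x.1, c1 x.2), (c2 x.1, c2 x.2)) := fun x => rfl
  have hmv : ∀ i x, e ((mv _ i).symm x) = ((mv _ i).symm (e x).1, (mv _ i).symm (e x).2) := by
    intro i x
    rw [he, he, mv_map, mv_map]
  obtain ⟨g, hg, hg'⟩ := cobound (fun x => F (e x).1 (e x).2) (fun x => hF _ _) (by
    rw [e.sum_comp (fun z => F z.1 z.2), Fintype.sum_prod_type]
    exact hF0)
  refine ⟨fun i x y => g i (e.symm (x, y)), fun i x y => hg _ _, fun x y => ?_⟩
  have h := hg' (e.symm (x, y))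
  simp only [Equiv.apply_symm_apply] at h
  rw [h]
  refine Finset.sum_congr rfl fun i _ => ?_
  congr 2
  rw [Equiv.eq_symm_apply, hmv, Equiv.apply_symm_apply]

/-- the `k`-th odd prime. -/
noncomputable def pr (k : ℕ) : ℕ := Nat.nth Nat.Prime (k + 1)

lemma pr_prime (k : ℕ) : (pr k).Prime := Nat.prime_nth_prime _

instance (k : ℕ) : Fact (pr k).Prime := ⟨pr_prime k⟩

lemma pr_inj {k m : ℕ} (h : pr k = pr m) : k = m := by
  have := Nat.nth_injective Nat.infinite_setOfPred_prime h
  omega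

lemma pr_ne_two (k : ℕ) : pr k ≠ 2 := by
  intro h
  have h2 : Nat.nth Nat.Prime 0 = 2 := Nat.nth_prime_zero_eq_two
  have := Nat.nth_injective Nat.infinite_setOfPred_prime (h.trans h2.symm)
  omega

abbrev Q (k : ℕ) : Type := ZMod (pr k) × ZMod (pr k)

noncomputable def sg (k : ℕ) (x : Q k) : ℝ := (quadraticChar (ZMod (pr k)) x.1 : ℤ)

lemma sg_abs (k : ℕ) (x : Q k) : |sg k x| ≤ 1 := by
  unfold sg
  by_cases h : x.1 = 0
  · simp [h]
  · rcases quadraticChar_dichotomy h with h | h <;> simp [h]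

lemma sg_sum (k : ℕ) : ∑ x, sg k x = 0 := by
  rw [Fintype.sum_prod_type]
  simp only [sg]
  rw [Finset.sum_comm]
  refine Finset.sum_eq_zero fun y _ => ?_
  rw [← Int.cast_sum, quadraticChar_sum_zero]
  · simp
  · rw [ZMod.ringChar_zmod_n]; exact pr_ne_two k

lemma sg_sq (k : ℕ) : (Fintype.card (Q k) : ℝ) / 2 ≤ ∑ x, sg k x * sg k x := by
  rw [Fintype.sum_prod_type]
  simp only [sg]
  have h : ∀ x : ZMod (pr k), ((quadraticChar (ZMod (pr k)) x : ℤ) : ℝ) * ((quadraticChar (ZMod (pr k)) x : ℤ) : ℝ)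
      = 1 - if x = 0 then 1 else 0 := by
    intro x
    by_cases h : x = 0
    · simp [h]
    · rcases quadraticChar_dichotomy h with h' | h' <;> simp [h, h']
  simp only [h, Finset.sum_const, Finset.card_univ, ← Finset.smul_sum, Finset.sum_sub_distrib]
  simp only [Fintype.card_prod, ZMod.card, Finset.sum_ite_eq', Finset.mem_univ, if_true]
  have : (2 : ℝ) ≤ pr k := by exact_mod_cast (pr_prime k).two_le
  simp
  nlinarith

/-- the shape parameter. -/
noncomputable def dl : ℝ := 1 / 10000

lemma exists_G (k m : ℕ) (hkm : k ≠ m) : ∃ G : Fin 5 → Q k → Q m → ℝ, (∀ i x y, |G i x y| ≤ 6000) ∧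
    (∀ x y, ∑ i, G i x y = 0) ∧
    (∀ x y, ∑ i, G i ((mv _ i).symm x) ((mv _ i).symm y) = sg k x * sg m y) := by
  obtain ⟨g, hg, hg'⟩ := cobound2 ((Nat.coprime_primes (pr_prime k) (pr_prime m)).2 (fun h => hkm (pr_inj h)))
    (fun x y => sg k x * sg m y) (fun x y => by
      rw [abs_mul]; exact mul_le_one₀ (sg_abs _ _) (abs_nonneg _) (sg_abs _ _)) (by
      simp only [← Finset.mul_sum, sg_sum]; simp)
  refine ⟨fun i x y => g i x y - if i = 0 then ∑ i', g i' x y else 0, ?_, ?_, ?_⟩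
  · intro i x y
    have h1 : |if i = 0 then ∑ i', g i' x y else 0| ≤ 5 * 880 := by
      split_ifs
      · refine (Finset.abs_sum_le_sum_abs _ _).trans ((Finset.sum_le_sum fun i _ => hg i x y).trans ?_)
        simp
      · simp
    have := abs_sub (g i x y) (if i = 0 then ∑ i', g i' x y else 0)
    linarith [hg i x y]
  · intro x y
    simp
  · intro x y
    rw [hg' x y]
    simp only [Finset.sum_sub_distrib, Finset.sum_ite_eq', Finset.mem_univ, if_true, mv_zero_symm]

noncomputable def bb (b : Bool) : ℝ := if b then 1 else 0

lemma exists_tau (S : ℕ → Bool) : ∃ τ : ∀ k m, Fin 5 → Q k → Q m → ℝ,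
    (∀ k m i x y, |τ k m i x y| ≤ 1) ∧
    (∀ k m j V, ∑ i, τ k m i ((mv _ i).symm j) V = sg k j * (dl * bb (S m) * sg m V)) ∧
    (∀ k m h h', ∑ i, τ k m i h (mv _ i h') = sg m h' * (dl * bb (S k) * sg k h)) := by
  have : ∀ k m, ∃ G : Fin 5 → Q k → Q m → ℝ, (∀ i x y, |G i x y| ≤ 6000) ∧
    (∀ x y, ∑ i, G i x y = 0) ∧
    (∀ x y, (bb (S m) - bb (S k)) * ∑ i, G i ((mv _ i).symm x) ((mv _ i).symm y)
      = (bb (S m) - bb (S k)) * (sg k x * sg m y)) := by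
    intro k m
    by_cases h : k = m
    · subst h
      exact ⟨fun _ _ _ => 0, by simp, by simp, by simp⟩
    · obtain ⟨G, h1, h2, h3⟩ := exists_G k m h
      exact ⟨G, h1, h2, fun x y => by rw [h3]⟩
  choose G h1 h2 h3 using this
  refine ⟨fun k m i h V => dl * ((if i = 0 then bb (S k) * (sg k h * sg m V) else 0) +
    (bb (S m) - bb (S k)) * G k m i h ((mv _ i).symm V)), ?_, ?_, ?_⟩
  · intro k m i x y
    have a1 : |if i = 0 then bb (S k) * (sg k x * sg m y) else 0| ≤ 1 := by
      split_ifs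
      · rw [abs_mul, abs_mul]
        have : |bb (S k)| ≤ 1 := by unfold bb; split_ifs <;> simp
        exact mul_le_one₀ this (by positivity) (mul_le_one₀ (sg_abs _ _) (abs_nonneg _) (sg_abs _ _))
      · simp
    have a2 : |(bb (S m) - bb (S k)) * G k m i x ((mv _ i).symm y)| ≤ 1 * 6000 := by
      rw [abs_mul]
      refine mul_le_mul ?_ (h1 _ _ _ _ _) (abs_nonneg _) zero_le_one
      unfold bb; split_ifs <;> simp
    rw [abs_mul]
    have := abs_add_le (if i = 0 then bb (S k) * (sg k x * sg m y) else 0) ((bb (S m) - bb (S k)) * G k m i x ((mv _ i).symm y))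
    rw [show |dl| = 1 / 10000 by unfold dl; rw [abs_of_nonneg]; norm_num]
    linarith
  · intro k m j V
    rw [← Finset.mul_sum, Finset.sum_add_distrib, ← Finset.mul_sum, h3]
    simp [mv_zero_symm]
    ring
  · intro k m h h'
    rw [← Finset.mul_sum, Finset.sum_add_distrib, ← Finset.mul_sum]
    simp only [Equiv.symm_apply_apply, h2]
    simp [mv]
    ring

lemma sepAlg (E : Type) [NormedRing E] [NormedAlgebra ℂ E] [CompleteSpace E] (s : Set E) (hs : s.Countable) :
    ∃ A : SepBanachAlgebra, ∃ f : A.carrier →ₙₐ[ℂ] E, (∀ a, ‖f a‖ = ‖a‖) ∧ ∀ x ∈ s, ∃ a, f a = x := by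
  let A := (NonUnitalAlgebra.adjoin ℂ s).topologicalClosure
  have h1 : ((NonUnitalAlgebra.adjoin ℂ s : NonUnitalSubalgebra ℂ E) : Set E) ⊆
      (Submodule.span ℂ (Submonoid.closure s : Set E) : Set E) := by
    have h : NonUnitalAlgebra.adjoin ℂ s ≤ (Algebra.adjoin ℂ s).toNonUnitalSubalgebra :=
      NonUnitalAlgebra.adjoin_le Algebra.subset_adjoin
    intro x hx
    have hx' : x ∈ Subalgebra.toSubmodule (Algebra.adjoin ℂ s) := h hx
    rw [Algebra.adjoin_eq_span] at hx'
    exact hx'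
  have h2 : (Submonoid.closure s : Set E).Countable := by
    rw [Submonoid.closure_eq_mrange, MonoidHom.coe_mrange]
    have := hs.to_subtype
    have : Countable (FreeMonoid s) := inferInstanceAs (Countable (List s))
    exact Set.countable_range _
  have h3 : TopologicalSpace.IsSeparable (A : Set E) := by
    have := ((h2.isSeparable.span (R := ℂ)).mono h1).closure
    exact this
  have h4 : IsClosed (A : Set E) := NonUnitalSubalgebra.isClosed_topologicalClosure _
  have : CompleteSpace A := h4.completeSpace_coe
  have : TopologicalSpace.SeparableSpace A := h3.separableSpace
  let ins : NormedSpace ℂ A :=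
    { (inferInstance : Module ℂ A) with norm_smul_le := fun c x => norm_smul_le c (x : E) }
  have : IsScalarTower ℂ A A := ⟨fun c x y => Subtype.ext (smul_mul_assoc c (x : E) (y : E))⟩
  have : SMulCommClass ℂ A A := ⟨fun c x y => Subtype.ext (mul_smul_comm c (x : E) (y : E)).symm⟩
  refine ⟨⟨A⟩, NonUnitalSubalgebraClass.subtype A, fun a => rfl, fun x hx => ?_⟩
  exact ⟨⟨x, NonUnitalSubalgebra.le_topologicalClosure _ (NonUnitalAlgebra.subset_adjoin ℂ hx)⟩, rfl⟩

abbrev Qt : Type := Σ k, Q k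

instance (k : ℕ) : Countable (Q k) := Finite.to_countable

abbrev H2 : Type := lp (fun _ : Qt => ℂ) ⊤

noncomputable def ev (h : Qt) : H2 →L[ℂ] ℂ := lp.evalCLM ℂ (fun _ : Qt => ℂ) ⊤ h

lemma ev_norm (h : Qt) (b : H2) : ‖ev h b‖ ≤ ‖b‖ := lp.norm_apply_le_norm ENNReal.top_ne_zero b h

lemma H2_ext (a b : H2) (h : ∀ t, ev t a = ev t b) : a = b := lp.ext (funext h)

lemma H2_norm_le (a : H2) (h : ∀ t, ‖ev t a‖ ≤ 1) : ‖a‖ ≤ 1 := lp.norm_le_of_forall_le zero_le_one h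

lemma H2_mk (f : Qt → ℂ) (hf : ∀ t, ‖f t‖ ≤ 1) : ∃ b : H2, ∀ t, ev t b = f t :=
  ⟨⟨f, memℓp_infty ⟨1, by rintro _ ⟨t, rfl⟩; exact hf t⟩⟩, fun t => rfl⟩

noncomputable def H1 : Submodule ℂ (ℂ × (Fin 5 → H2)) where
  carrier := {w | ∀ k (j : Q k), ∑ i, ev ⟨k, (mv _ i).symm j⟩ (w.2 i) = (sg k j : ℂ) * w.1}
  add_mem' := by
    intro a b ha hb k j
    simp only [Prod.snd_add, Pi.add_apply, map_add, Finset.sum_add_distrib, Prod.fst_add]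
    rw [ha k j, hb k j]; ring
  zero_mem' := by intro k j; simp
  smul_mem' := by
    intro c a ha k j
    simp only [Prod.smul_snd, Pi.smul_apply, map_smul, ← Finset.smul_sum, Prod.smul_fst]
    rw [ha k j]; simp; ring

lemma H1_closed : IsClosed (H1 : Set (ℂ × (Fin 5 → H2))) := by
  have : (H1 : Set (ℂ × (Fin 5 → H2))) = ⋂ k, ⋂ j : Q k,
      {w | ∑ i, ev ⟨k, (mv _ i).symm j⟩ (w.2 i) = (sg k j : ℂ) * w.1} := by
    ext w; simp [H1]
  rw [this]
  refine isClosed_iInter fun k => isClosed_iInter fun j => isClosed_eq ?_ ?_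
  · refine continuous_finsetSum _ fun i _ => (ev _).continuous.comp ?_
    fun_prop
  · fun_prop

instance : CompleteSpace H1 := H1_closed.completeSpace_coe

abbrev X : Type := ℂ × H1 × H2

lemma X1 (x : X) : ‖x.1‖ ≤ ‖x‖ := norm_fst_le x
lemma X2 (x : X) : ‖x.2.1‖ ≤ ‖x‖ := (norm_fst_le x.2).trans (norm_snd_le x)
lemma X3 (x : X) : ‖x.2.2‖ ≤ ‖x‖ := (norm_snd_le x.2).trans (norm_snd_le x)

noncomputable def oL : X →L[ℂ] X := LinearMap.mkContinuous
  { toFun := fun x => (x.2.1.1.1, 0, 0)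
    map_add' := fun x y => by simp
    map_smul' := fun c x => by simp } 1 (fun x => by
      have : ‖x.2.1.1.1‖ ≤ ‖x.2.1‖ := norm_fst_le x.2.1.1
      have := this.trans (X2 x)
      simpa [Prod.norm_def] using this)

noncomputable def ox (i : Fin 5) : X →L[ℂ] X := LinearMap.mkContinuous
  { toFun := fun x => (0, 0, x.2.1.1.2 i)
    map_add' := fun x y => by simp
    map_smul' := fun c x => by simp } 1 (fun x => by
      have : ‖x.2.1.1.2‖ ≤ ‖x.2.1‖ := norm_snd_le x.2.1.1
      have := (norm_le_pi_norm x.2.1.1.2 i).trans (this.trans (X2 x))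
      simpa [Prod.norm_def] using this)

noncomputable def oU (h : Qt) : X →L[ℂ] X := LinearMap.mkContinuous
  { toFun := fun x => (ev h x.2.2, 0, 0)
    map_add' := fun x y => by simp
    map_smul' := fun c x => by simp } 1 (fun x => by
      have := (ev_norm h x.2.2).trans (X3 x)
      simpa [Prod.norm_def] using this)

noncomputable def oV (v : H1) (hv : ‖v‖ ≤ 1) : X →L[ℂ] X := LinearMap.mkContinuous
  { toFun := fun x => (0, x.1 • v, 0)
    map_add' := fun x y => by simp [add_smul]
    map_smul' := fun c x => by simp [mul_smul] } 1 (fun x => by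
      have : ‖x.1 • v‖ ≤ ‖x‖ := by
        rw [norm_smul]
        exact (mul_le_of_le_one_right (norm_nonneg _) hv).trans (X1 x)
      simpa [Prod.norm_def, norm_smul] using this)

noncomputable def oR (r : H2) (hv : ‖r‖ ≤ 1) : X →L[ℂ] X := LinearMap.mkContinuous
  { toFun := fun x => (0, 0, x.1 • r)
    map_add' := fun x y => by simp [add_smul]
    map_smul' := fun c x => by simp [mul_smul] } 1 (fun x => by
      have : ‖x.1 • r‖ ≤ ‖x‖ := by
        rw [norm_smul]
        exact (mul_le_of_le_one_right (norm_nonneg _) hv).trans (X1 x)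
      simpa [Prod.norm_def, norm_smul] using this)

lemma oL_apply (x : X) : oL x = (x.2.1.1.1, 0, 0) := rfl
lemma ox_apply (i) (x : X) : ox i x = (0, 0, x.2.1.1.2 i) := rfl
lemma oU_apply (h) (x : X) : oU h x = (ev h x.2.2, 0, 0) := rfl
lemma oV_apply (v) (hv) (x : X) : oV v hv x = (0, x.1 • v, 0) := rfl
lemma oR_apply (v) (hv) (x : X) : oR v hv x = (0, 0, x.1 • v) := rfl

lemma op_lower (T : X →L[ℂ] X) (c : ℂ) (h : ∀ x, T x = (c * x.1, 0, 0)) : ‖c‖ ≤ ‖T‖ := by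
  have h1 := T.le_opNorm ((1, 0, 0) : X)
  have h2 : ‖((1, 0, 0) : X)‖ = 1 := by simp [Prod.norm_def]
  rw [h, h2, mul_one ‖T‖] at h1
  refine le_trans ?_ ((norm_fst_le _).trans h1)
  simp

lemma exists_ops (S : ℕ → Bool) :
    ∃ (x : Fin 5 → (X →L[ℂ] X)) (L R : X →L[ℂ] X) (U V : ∀ k, Q k → (X →L[ℂ] X)),
      (∀ i, ‖x i‖ ≤ 1) ∧ ‖L‖ ≤ 1 ∧ ‖R‖ ≤ 1 ∧ (∀ k h, ‖U k h‖ ≤ 1) ∧ (∀ k h, ‖V k h‖ ≤ 1) ∧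
      (∀ k j, ∑ i, U k ((mv _ i).symm j) * x i = (sg k j : ℂ) • L) ∧
      (∀ k h, ∑ i, x i * V k (mv _ i h) = (sg k h : ℂ) • R) ∧
      (∀ k, S k = false → ∑ j, (sg k j : ℂ) • (L * V k j) = 0) ∧
      (∀ k, S k = true → dl / 2 * Fintype.card (Q k) ≤ ‖∑ j, (sg k j : ℂ) • (L * V k j)‖) := by
  obtain ⟨τ, ht, hta, htb⟩ := exists_tau S
  have hl : ∀ m V, |dl * bb (S m) * sg m V| ≤ 1 := by
    intro m V
    have h1 : |bb (S m)| ≤ 1 := by unfold bb; split_ifs <;> simp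
    have h2 : |dl| ≤ 1 := by unfold dl; rw [abs_of_nonneg] <;> norm_num
    rw [abs_mul, abs_mul]
    exact mul_le_one₀ (mul_le_one₀ h2 (abs_nonneg _) h1) (abs_nonneg _) (sg_abs _ _)
  obtain ⟨r, hr⟩ := H2_mk (fun t => ((dl * bb (S t.1) * sg t.1 t.2 : ℝ) : ℂ)) (fun t => by
    rw [Complex.norm_real]; exact hl _ _)
  have hr1 : ‖r‖ ≤ 1 := H2_norm_le _ fun t => by
    rw [hr, Complex.norm_real]; exact hl _ _
  have hv : ∀ m (V : Q m), ∃ v : H1, ‖v‖ ≤ 1 ∧ v.1.1 = ((dl * bb (S m) * sg m V : ℝ) : ℂ) ∧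
      ∀ i k (h : Q k), ev ⟨k, h⟩ (v.1.2 i) = ((τ k m i h V : ℝ) : ℂ) := by
    intro m V
    have h0 : ∀ i, ∃ b : H2, ∀ t, ev t b = ((τ t.1 m i t.2 V : ℝ) : ℂ) := fun i => H2_mk _ (fun t => by
      rw [Complex.norm_real]; exact ht _ _ _ _ _)
    choose b hb using h0
    refine ⟨⟨(((dl * bb (S m) * sg m V : ℝ) : ℂ), b), ?_⟩, ?_, rfl, fun i k h => hb _ _⟩
    · intro k j
      simp only [hb]
      rw [← Complex.ofReal_sum, ← Complex.ofReal_mul]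
      rw [hta]
    · refine max_le ?_ ?_
      · show ‖((dl * bb (S m) * sg m V : ℝ) : ℂ)‖ ≤ 1
        rw [Complex.norm_real]; exact hl _ _
      · refine (pi_norm_le_iff_of_nonneg zero_le_one).2 fun i => H2_norm_le _ fun t => ?_
        have := hb i t
        show ‖ev t (b i)‖ ≤ 1
        rw [hb, Complex.norm_real]; exact ht _ _ _ _ _
  choose v hv1 hv2 hv3 using hv
  have hLV : ∀ k (x : X), (∑ j, (sg k j : ℂ) • (oL * oV (v k j) (hv1 k j))) x =
      (((dl * bb (S k) * ∑ j, sg k j * sg k j : ℝ) : ℂ) * x.1, 0, 0) := by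
    intro k x
    rw [_root_.sum_apply]
    have : ∀ j, ((sg k j : ℂ) • (oL * oV (v k j) (hv1 k j))) x =
        ((((dl * bb (S k) * (sg k j * sg k j) : ℝ) : ℂ) * x.1, 0, 0) : X) := by
      intro j
      have : ((sg k j : ℂ) • (oL * oV (v k j) (hv1 k j))) x = (sg k j : ℂ) • oL (oV (v k j) (hv1 k j) x) := rfl
      rw [this, oV_apply, oL_apply]
      simp [hv2]
      ring
    simp only [this]
    refine Prod.ext ?_ (Prod.ext ?_ ?_)
    · rw [Prod.fst_sum]
      simp only [← Finset.sum_mul, Finset.mul_sum, Complex.ofReal_sum]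
    · rw [Prod.snd_sum, Prod.fst_sum]; simp
    · rw [Prod.snd_sum, Prod.snd_sum]; simp
  refine ⟨ox, oL, oR r hr1, fun k h => oU ⟨k, h⟩, fun k h => oV (v k h) (hv1 k h),
    fun i => LinearMap.mkContinuous_norm_le _ zero_le_one _,
    LinearMap.mkContinuous_norm_le _ zero_le_one _,
    LinearMap.mkContinuous_norm_le _ zero_le_one _,
    fun k h => LinearMap.mkContinuous_norm_le _ zero_le_one _,
    fun k h => LinearMap.mkContinuous_norm_le _ zero_le_one _, ?_, ?_, ?_, ?_⟩
  · intro k j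
    refine ContinuousLinearMap.ext fun x => ?_
    rw [_root_.sum_apply]
    have h := x.2.1.2 k j
    have h1 : ∀ i, (oU ⟨k, (mv _ i).symm j⟩ * ox i) x =
      ((ev ⟨k, (mv _ i).symm j⟩ (x.2.1.1.2 i), 0, 0) : X) := fun i => rfl
    have h2 : ((sg k j : ℂ) • oL) x = (((sg k j : ℂ) * x.2.1.1.1, 0, 0) : X) := by
      have : ((sg k j : ℂ) • oL) x = (sg k j : ℂ) • oL x := rfl
      rw [this, oL_apply]; simp
    simp only [h1]
    rw [h2]
    refine Prod.ext ?_ (Prod.ext ?_ ?_)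
    · rw [Prod.fst_sum]; exact h
    · rw [Prod.snd_sum, Prod.fst_sum]; simp
    · rw [Prod.snd_sum, Prod.snd_sum]; simp
  · intro k h
    refine ContinuousLinearMap.ext fun x => ?_
    rw [_root_.sum_apply]
    have h1 : ∀ i, (ox i * oV (v k (mv _ i h)) (hv1 k (mv _ i h))) x =
      ((0, 0, x.1 • (v k (mv _ i h)).1.2 i) : X) := fun i => rfl
    have h2 : ((sg k h : ℂ) • oR r hr1) x = ((0, 0, (sg k h : ℂ) • x.1 • r) : X) := by
      have : ((sg k h : ℂ) • oR r hr1) x = (sg k h : ℂ) • oR r hr1 x := rfl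
      rw [this, oR_apply]; simp
    simp only [h1]
    rw [h2]
    refine Prod.ext ?_ (Prod.ext ?_ ?_)
    · rw [Prod.fst_sum]; simp
    · rw [Prod.snd_sum, Prod.fst_sum]; simp
    · rw [Prod.snd_sum, Prod.snd_sum]
      refine H2_ext _ _ fun t => ?_
      obtain ⟨m, t⟩ := t
      simp only [map_sum, map_smul, hv3, hr, smul_eq_mul]
      rw [← Finset.mul_sum, ← Complex.ofReal_sum, htb]
      push_cast
      ring
  · intro k hk
    refine ContinuousLinearMap.ext fun x => ?_
    refine (hLV k x).trans ?_
    rw [hk]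
    simp [bb]
  · intro k hk
    refine le_trans ?_ (op_lower _ _ (hLV k))
    rw [hk]
    have h3 := sg_sq k
    have h4 : 0 ≤ dl := by unfold dl; norm_num
    simp only [bb, if_true, mul_one]
    rw [Complex.norm_real]
    refine le_trans ?_ (le_abs_self _)
    nlinarith

lemma exists_alg (S : ℕ → Bool) :
    ∃ (A : SepBanachAlgebra) (x : Fin 5 → A.carrier) (L R : A.carrier) (U V : ∀ k, Q k → A.carrier),
      (∀ i, ‖x i‖ ≤ 1) ∧ ‖L‖ ≤ 1 ∧ ‖R‖ ≤ 1 ∧ (∀ k h, ‖U k h‖ ≤ 1) ∧ (∀ k h, ‖V k h‖ ≤ 1) ∧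
      (∀ k j, ∑ i, U k ((mv _ i).symm j) * x i = (sg k j : ℂ) • L) ∧
      (∀ k h, ∑ i, x i * V k (mv _ i h) = (sg k h : ℂ) • R) ∧
      (∀ k, S k = false → ∑ j, (sg k j : ℂ) • (L * V k j) = 0) ∧
      (∀ k, S k = true → dl / 2 * Fintype.card (Q k) ≤ ‖∑ j, (sg k j : ℂ) • (L * V k j)‖) := by
  obtain ⟨x, L, R, U, V, h1, h2, h3, h4, h5, h6, h7, h8, h9⟩ := exists_ops S
  let s : Set (X →L[ℂ] X) := Set.range x ∪ {L, R} ∪ Set.range (fun t : Qt => U t.1 t.2) ∪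
    Set.range (fun t : Qt => V t.1 t.2)
  have hs : s.Countable := by
    refine (((Set.countable_range _).union ?_).union (Set.countable_range _)).union (Set.countable_range _)
    exact (Set.toFinite _).countable
  obtain ⟨A, f, hf, hfs⟩ := sepAlg _ s hs
  have hinj : Function.Injective f := by
    intro a b hab
    have : ‖f (a - b)‖ = 0 := by rw [map_sub, hab, sub_self]; exact norm_zero (E := X →L[ℂ] X)
    rw [hf, norm_eq_zero] at this
    exact sub_eq_zero.1 this
  have ex : ∀ i, ∃ a, f a = x i := fun i => hfs _ (Or.inl (Or.inl (Or.inl ⟨i, rfl⟩)))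
  have eL : ∃ a, f a = L := hfs _ (Or.inl (Or.inl (Or.inr (Or.inl rfl))))
  have eR : ∃ a, f a = R := hfs _ (Or.inl (Or.inl (Or.inr (Or.inr rfl))))
  have eU : ∀ k h, ∃ a, f a = U k h := fun k h => hfs _ (Or.inl (Or.inr ⟨⟨k, h⟩, rfl⟩))
  have eV : ∀ k h, ∃ a, f a = V k h := fun k h => hfs _ (Or.inr ⟨⟨k, h⟩, rfl⟩)
  choose x' hx using ex
  choose L' hL using eL
  choose R' hR using eR
  choose U' hU using eU
  choose V' hV using eV
  refine ⟨A, x', L', R', U', V', ?_, ?_, ?_, ?_, ?_, ?_, ?_, ?_, ?_⟩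
  · intro i; rw [← hf, hx]; exact h1 i
  · rw [← hf, hL]; exact h2
  · rw [← hf, hR]; exact h3
  · intro k h; rw [← hf, hU]; exact h4 k h
  · intro k h; rw [← hf, hV]; exact h5 k h
  · intro k j; apply hinj; simp only [map_sum, map_mul, map_smul, hx, hU, hL]; exact h6 k j
  · intro k j; apply hinj; simp only [map_sum, map_mul, map_smul, hx, hV, hR]; exact h7 k j
  · intro k hk; apply hinj; simp only [map_sum, map_mul, map_smul, hL, hV, map_zero]; exact h8 k hk
  · intro k hk; rw [← hf]; simp only [map_sum, map_mul, map_smul, hL, hV]; exact h9 k hk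

/-- one approximation step: an average of products with one factor perturbed. -/
lemma avg_bound {B : Type*} [NonUnitalNormedRing B] [NormedSpace ℂ B] {ι : Type*} [Fintype ι]
    (c : ι → ℂ) (hc : ∀ i, ‖c i‖ ≤ 1) (P : ι → B) (ε : ℝ) (hP : ∀ i, ‖P i‖ ≤ ε) :
    ‖∑ i, c i • P i‖ ≤ Fintype.card ι * ε := by
  refine (norm_sum_le _ _).trans ?_
  calc ∑ i, ‖c i • P i‖ ≤ ∑ _i : ι, ε := by
        refine Finset.sum_le_sum fun i _ => ?_
        rw [norm_smul]
        exact (mul_le_of_le_one_left (norm_nonneg _) (hc i)).trans (hP i)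
    _ = _ := by simp

lemma key {B : Type*} [NonUnitalNormedRing B] [NormedSpace ℂ B] [IsScalarTower ℂ B B] [SMulCommClass ℂ B B]
    (k : ℕ) (x x' : Fin 5 → B) (L R L' R' : B) (U V V' : Q k → B) (ε : ℝ)
    (hU : ∀ h, ‖U h‖ ≤ 1) (hV' : ∀ h, ‖V' h‖ ≤ 1)
    (h6 : ∀ j, ∑ i, U ((mv _ i).symm j) * x i = (sg k j : ℂ) • L)
    (h7 : ∀ h, ∑ i, x i * V (mv _ i h) = (sg k h : ℂ) • R)
    (h7' : ∀ h, ∑ i, x' i * V' (mv _ i h) = (sg k h : ℂ) • R')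
    (hx : ∀ i, ‖x i - x' i‖ ≤ ε) (hL : ‖L - L'‖ ≤ ε) (hR : ‖R - R'‖ ≤ ε) :
    ‖∑ j, (sg k j : ℂ) • (L * V j) - ∑ j, (sg k j : ℂ) • (L' * V' j)‖ ≤ Fintype.card (Q k) * (7 * ε) := by
  have hs : ∀ j, ‖(sg k j : ℂ)‖ ≤ 1 := fun j => by rw [Complex.norm_real]; exact sg_abs k j
  have swap : ∀ W : Q k → B, ∑ j, (sg k j : ℂ) • (L * W j) = ∑ h, ∑ i, U h * x i * W (mv _ i h) := by
    intro W
    have : ∀ j, (sg k j : ℂ) • (L * W j) = ∑ i, U ((mv _ i).symm j) * x i * W j := by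
      intro j
      rw [← smul_mul_assoc, ← h6, Finset.sum_mul]
    simp only [this]
    rw [Finset.sum_comm, Finset.sum_comm (s := (univ : Finset (Q k)))]
    refine Finset.sum_congr rfl fun i _ => ?_
    rw [← Equiv.sum_comp (mv (ZMod (pr k)) i)]
    simp
  have a1 : ∑ j, (sg k j : ℂ) • (L * V j) = ∑ h, (sg k h : ℂ) • (U h * R) := by
    rw [swap]
    refine Finset.sum_congr rfl fun h _ => ?_
    rw [← mul_smul_comm, ← h7, Finset.mul_sum]
    simp only [mul_assoc]
  have a2 : ∑ h, ∑ i, U h * x' i * V' (mv _ i h) = ∑ h, (sg k h : ℂ) • (U h * R') := by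
    refine Finset.sum_congr rfl fun h _ => ?_
    rw [← mul_smul_comm, ← h7', Finset.mul_sum]
    simp only [mul_assoc]
  have e1 : ‖∑ h, (sg k h : ℂ) • (U h * R) - ∑ h, (sg k h : ℂ) • (U h * R')‖ ≤ Fintype.card (Q k) * ε := by
    rw [← Finset.sum_sub_distrib]
    simp only [← smul_sub, ← mul_sub]
    refine avg_bound _ hs _ _ fun h => ?_
    exact (norm_mul_le _ _).trans ((mul_le_of_le_one_left (norm_nonneg _) (hU h)).trans hR)
  have e3 : ‖∑ j, (sg k j : ℂ) • (L * V' j) - ∑ j, (sg k j : ℂ) • (L' * V' j)‖ ≤ Fintype.card (Q k) * ε := by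
    rw [← Finset.sum_sub_distrib]
    simp only [← smul_sub, ← sub_mul]
    refine avg_bound _ hs _ _ fun h => ?_
    exact (norm_mul_le _ _).trans ((mul_le_of_le_one_right (norm_nonneg _) (hV' h)).trans hL)
  have e2 : ‖∑ h, ∑ i, U h * x' i * V' (mv _ i h) - ∑ h, ∑ i, U h * x i * V' (mv _ i h)‖
      ≤ Fintype.card (Q k) * (5 * ε) := by
    rw [← Finset.sum_sub_distrib]
    have := avg_bound (fun _ : Q k => (1 : ℂ)) (by simp)
      (fun h => ∑ i, U h * x' i * V' (mv _ i h) - ∑ i, U h * x i * V' (mv _ i h)) (5 * ε) (fun h => by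
        rw [← Finset.sum_sub_distrib]
        refine (norm_sum_le _ _).trans ((Finset.sum_le_card_nsmul _ _ ε fun i _ => ?_).trans (by simp))
        rw [← sub_mul, ← mul_sub]
        refine (norm_mul_le _ _).trans ((mul_le_of_le_one_right (norm_nonneg _) (hV' _)).trans ?_)
        refine (norm_mul_le _ _).trans ((mul_le_of_le_one_left (norm_nonneg _) (hU h)).trans ?_)
        rw [norm_sub_rev]; exact hx i)
    simpa using this
  rw [a2, ← swap V'] at e2
  rw [a1]
  calc _ ≤ _ := (norm_sub_le_norm_sub_add_norm_sub _ (∑ h, (sg k h : ℂ) • (U h * R')) _)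
    _ ≤ Fintype.card (Q k) * ε + (Fintype.card (Q k) * (5 * ε) + Fintype.card (Q k) * ε) :=
      add_le_add e1 ((norm_sub_le_norm_sub_add_norm_sub _ (∑ j, (sg k j : ℂ) • (L * V' j)) _).trans
        (add_le_add e2 e3))
    _ = _ := by ring

/-- There is no separable complex Banach algebra `B` such that every separable
complex Banach algebra `A` admits a contractive homomorphic embedding into `B`:
for every separable Banach algebra `B` there is a separable Banach algebra `A`
such that no injective algebra homomorphism `φ : A → B` is simultaneously
contractive and bounded below. -/
theorem no_universal_separable_Banach_algebra_contractive
    (B : SepBanachAlgebra) :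
    ∃ A : SepBanachAlgebra,
      ¬ ∃ φ : A.carrier →ₙₐ[ℂ] B.carrier,
        Function.Injective φ ∧
        (∀ a : A.carrier, ‖φ a‖ ≤ ‖a‖) ∧
        (∃ c : ℝ, 0 < c ∧ ∀ a : A.carrier, c * ‖a‖ ≤ ‖φ a‖) := by
  by_contra hcon
  push Not at hcon
  have hdl : 0 < dl := by unfold dl; norm_num
  have data : ∀ S : ℕ → Bool, ∃ (x : Fin 5 → B.carrier) (L R : B.carrier) (U V : ∀ k, Q k → B.carrier) (c : ℝ),
      0 < c ∧ (∀ k h, ‖U k h‖ ≤ 1) ∧ (∀ k h, ‖V k h‖ ≤ 1) ∧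
      (∀ k j, ∑ i, U k ((mv _ i).symm j) * x i = (sg k j : ℂ) • L) ∧
      (∀ k h, ∑ i, x i * V k (mv _ i h) = (sg k h : ℂ) • R) ∧
      (∀ k, S k = false → ∑ j, (sg k j : ℂ) • (L * V k j) = 0) ∧
      (∀ k, S k = true → c * Fintype.card (Q k) ≤ ‖∑ j, (sg k j : ℂ) • (L * V k j)‖) := by
    intro S
    obtain ⟨A, x, L, R, U, V, h1, h2, h3, h4, h5, h6, h7, h8, h9⟩ := exists_alg S
    obtain ⟨φ, -, hφ, c, hc, hc'⟩ := hcon A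
    refine ⟨fun i => φ (x i), φ L, φ R, fun k h => φ (U k h), fun k h => φ (V k h), c * (dl / 2),
      by positivity, fun k h => (hφ _).trans (h4 k h), fun k h => (hφ _).trans (h5 k h), ?_, ?_, ?_, ?_⟩
    · intro k j; rw [← map_smul, ← h6]; simp only [map_sum, map_mul]
    · intro k j; rw [← map_smul, ← h7]; simp only [map_sum, map_mul]
    · intro k hk
      have := congrArg φ (h8 k hk)
      simpa only [map_sum, map_mul, map_smul, map_zero] using this
    · intro k hk
      have a1 := hc' (∑ j, (sg k j : ℂ) • (L * V k j))
      have a2 := mul_le_mul_of_nonneg_left (h9 k hk) hc.le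
      simp only [map_sum, map_mul, map_smul] at a1
      linarith
  choose x L R U V c hc hU hV h6 h7 h8 h9 using data
  have hm : ∀ S, ∃ m : ℕ, 1 / ((m : ℝ) + 1) < c S := fun S => exists_nat_one_div_lt (hc S)
  choose m hm using hm
  have : Nonempty B.carrier := ⟨0⟩
  let d := TopologicalSpace.denseSeq B.carrier
  have hd : DenseRange d := TopologicalSpace.denseRange_denseSeq _
  have happ : ∀ (n : ℕ) (b : B.carrier), ∃ i, ‖b - d i‖ < 1 / (100 * ((n : ℝ) + 1)) := by
    intro n b
    obtain ⟨i, hi⟩ := hd.exists_dist_lt b (ε := 1 / (100 * ((n : ℝ) + 1))) (by positivity)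
    exact ⟨i, by rwa [← dist_eq_norm]⟩
  choose ap hap using happ
  let code : (ℕ → Bool) → ℕ × (Fin 5 → ℕ) × ℕ × ℕ := fun S =>
    (m S, fun i => ap (m S) (x S i), ap (m S) (L S), ap (m S) (R S))
  have hclose : ∀ n (a b : B.carrier), ap n a = ap n b → ‖a - b‖ ≤ 2 * (1 / (100 * ((n : ℝ) + 1))) := by
    intro n a b h
    have h1 := hap n a
    have h2 := hap n b
    rw [← h] at h2
    have := norm_sub_le_norm_sub_add_norm_sub a (d (ap n a)) b
    rw [norm_sub_rev (d (ap n a)) b] at this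
    linarith
  have main : ∀ S T, code S = code T → ∀ k, S k = true → T k = false → False := by
    intro S T hST k hS hT
    simp only [code, Prod.mk.injEq] at hST
    obtain ⟨e1, e2, e3, e4⟩ := hST
    rw [← e1] at e2 e3 e4
    have := key k (x S) (x T) (L S) (R S) (L T) (R T) (U S k) (V S k) (V T k)
      (2 * (1 / (100 * ((m S : ℝ) + 1)))) (hU S k) (hV T k) (h6 S k) (h7 S k) (h7 T k)
      (fun i => hclose _ _ _ (congrFun e2 i)) (hclose _ _ _ e3) (hclose _ _ _ e4)
    rw [h8 T k hT, sub_zero] at this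
    have h := (h9 S k hS).trans this
    have hpos : (0 : ℝ) < Fintype.card (Q k) := by exact_mod_cast Fintype.card_pos
    rw [mul_comm] at h
    have h' := le_of_mul_le_mul_left h hpos
    have h3 := hm S
    have h4 : 1 / (100 * ((m S : ℝ) + 1)) = (1 / ((m S : ℝ) + 1)) / 100 := by
      rw [mul_comm, ← div_div]
    have h5 : 0 < 1 / ((m S : ℝ) + 1) := by positivity
    rw [h4] at h'
    linarith
  have hinj : Function.Injective code := by
    intro S T h
    funext k
    cases hS : S k <;> cases hT : T k
    · rfl
    · exact (main T S h.symm k hT hS).elim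
    · exact (main S T h k hS hT).elim
    · rfl
  have : Countable (ℕ → Bool) := hinj.countable
  obtain ⟨f, hf⟩ := exists_surjective_nat (ℕ → Bool)
  obtain ⟨n, hn⟩ := hf (fun n => !(f n n))
  have := congrFun hn n
  simp at this
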